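/- arXiv:2204.04989 — 3 statements merged into one kernel-verified Lean document; each statement's English description precedes it below -/
import Mathlib

section
/- Let Ω ⊆ ℝ^d be open and let f : Ω × ℝ^d → [0,∞) be convex in its second variable. Fix a nonnegative function α ∈ C_c^1(ℝ^d) with ∫_{ℝ^d} α(ξ) dξ = 1, and for j ∈ ℕ, j ≥ 1, and q ∈ ℚ^d set α_{j,q}(ξ) := j^d α(j(q − ξ)). Define a^0_{j,q}(x) := ∫_{ℝ^d} f(x,ξ)((d+1)α_{j,q}(ξ) + ⟨∇α_{j,q}(ξ), ξ⟩) dξ and a_{j,q}(x) := −∫_{ℝ^d} f(x,ξ) ∇α_{j,q}(ξ) dξ. Then for every (x,ξ) ∈ Ω × ℝ^d one has f(x,ξ) = sup_{j ∈ ℕ, q ∈ ℚ^d} max(a^0_{j,q}(x) + ⟨a_{j,q}(x), ξ⟩, 0). -/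
open MeasureTheory Filter Topology
open scoped RealInnerProductSpace

lemma dg_slope_le {H : ℝ → ℝ} {H' c : ℝ} (h : HasDerivAt H H' 1)
    (hs : ∀ s, 1 < s → H s - H 1 ≤ (s - 1) * c) : H' ≤ c := by
  have h1 : Tendsto (slope H 1) (𝓝[>] 1) (𝓝 H') :=
    (hasDerivAt_iff_tendsto_slope.1 h).mono_left
      (nhdsWithin_mono _ (fun x hx => ne_of_gt hx))
  refine le_of_tendsto h1 ?_
  filter_upwards [self_mem_nhdsWithin] with s hs'
  have hs1 : (1:ℝ) < s := hs'
  rw [slope_def_field, div_le_iff₀ (by linarith)]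
  linarith [hs s hs1]

lemma dg_le_slope {H : ℝ → ℝ} {H' c : ℝ} (h : HasDerivAt H H' 1)
    (hs : ∀ s, 1 / 2 < s → s < 1 → H s - H 1 ≤ (s - 1) * c) : c ≤ H' := by
  have h1 : Tendsto (slope H 1) (𝓝[<] 1) (𝓝 H') :=
    (hasDerivAt_iff_tendsto_slope.1 h).mono_left
      (nhdsWithin_mono _ (fun x hx => ne_of_lt hx))
  refine ge_of_tendsto h1 ?_
  have h2 : ∀ᶠ s : ℝ in 𝓝[<] 1, 1 / 2 < s :=
    nhdsWithin_le_nhds (lt_mem_nhds (by norm_num))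
  filter_upwards [self_mem_nhdsWithin, h2] with s hs' hs2
  have hs1 : s < 1 := hs'
  rw [slope_def_field, le_div_iff_of_neg (by linarith)]
  linarith [hs s hs2 hs1]

lemma dg_cov {d : ℕ} (g β : EuclideanSpace ℝ (Fin d) → ℝ) (ξ : EuclideanSpace ℝ (Fin d))
    {s : ℝ} (hs : 0 < s) :
    s ^ d * ∫ u, g u * β (ξ + s • (u - ξ)) = ∫ u, g (ξ + s⁻¹ • (u - ξ)) * β u := by
  have h1 : ∫ u, g u * β (ξ + s • (u - ξ)) = ∫ w, g (ξ + w) * β (ξ + s • w) := by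
    rw [← integral_sub_right_eq_self (fun w => g (ξ + w) * β (ξ + s • w)) ξ]
    simp
  have h2 : ∫ u, g (ξ + s⁻¹ • (u - ξ)) * β u = ∫ w, g (ξ + s⁻¹ • w) * β (ξ + w) := by
    rw [← integral_sub_right_eq_self (fun w => g (ξ + s⁻¹ • w) * β (ξ + w)) ξ]
    simp
  have h3 := Measure.integral_comp_smul (volume : Measure (EuclideanSpace ℝ (Fin d)))
    (fun w => g (ξ + s⁻¹ • w) * β (ξ + w)) s
  simp only [inv_smul_smul₀ hs.ne', finrank_euclideanSpace, Fintype.card_fin, smul_eq_mul] at h3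
  rw [h1, h2, h3, abs_of_pos (by positivity), ← mul_assoc, mul_inv_cancel₀ (by positivity), one_mul]

lemma dg_deriv {d : ℕ} {g β : EuclideanSpace ℝ (Fin d) → ℝ} (hg : Continuous g)
    (hβ : ContDiff ℝ 1 β) (hc : HasCompactSupport β) (ξ : EuclideanSpace ℝ (Fin d)) :
    HasDerivAt (fun s : ℝ => s ^ (d + 1) * ∫ u, g u * β (ξ + s • (u - ξ)))
      (∫ u, g u * (((d : ℝ) + 1) * β u + fderiv ℝ β u (u - ξ))) 1 := by
  have hβc := hβ.continuous
  have hfc : Continuous (fderiv ℝ β) := hβ.continuous_fderiv one_ne_zero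
  have hfs : HasCompactSupport (fderiv ℝ β) := hc.fderiv ℝ
  obtain ⟨C, hC⟩ := hfs.exists_bound_of_continuous hfc
  have hC0 : 0 ≤ C := (norm_nonneg _).trans (hC 0)
  obtain ⟨R, hR⟩ := hfs.isCompact.isBounded.subset_closedBall ξ
  have hint : Integrable (fun u => g u * β u) :=
    (hg.mul hβc).integrable_of_hasCompactSupport hc.mul_left
  have hint2 : Integrable (fun u => g u * fderiv ℝ β u (u - ξ)) := by
    refine Continuous.integrable_of_hasCompactSupport (by fun_prop) ?_
    refine hfs.mono ?_
    intro u hu hu0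
    simp [hu0] at hu
  have key := hasDerivAt_integral_of_dominated_loc_of_deriv_le
    (μ := (volume : Measure (EuclideanSpace ℝ (Fin d)))) (𝕜 := ℝ)
    (F := fun s u => g u * β (ξ + s • (u - ξ)))
    (F' := fun s u => g u * fderiv ℝ β (ξ + s • (u - ξ)) (u - ξ))
    (x₀ := (1:ℝ)) (s := Metric.ball 1 (1/2))
    (bound := (Metric.closedBall ξ (2 * R)).indicator (fun u => |g u| * (C * ‖u - ξ‖)))
    (Metric.ball_mem_nhds _ (by norm_num))
    (Eventually.of_forall fun s => (by fun_prop : Continuous _).aestronglyMeasurable)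
    (by simpa using hint)
    ((by fun_prop : Continuous _).aestronglyMeasurable)
    ?_ ?_ ?_
  · have h := ((hasDerivAt_pow (d + 1) (1:ℝ)).mul key.2)
    refine h.congr_deriv ?_
    simp only [one_smul, add_sub_cancel, one_pow, mul_one, one_mul, mul_add]
    rw [integral_add _ hint2]
    · rw [← integral_const_mul]
      push_cast
      congr 2
      ext u; ring
    · refine (hint.const_mul ((d:ℝ) + 1)).congr (Eventually.of_forall fun u => ?_)
      simp only; ring
  · refine Eventually.of_forall fun u s hs => ?_
    rw [Metric.mem_ball, Real.dist_eq, abs_lt] at hs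
    by_cases hu : u ∈ Metric.closedBall ξ (2 * R)
    · rw [Set.indicator_of_mem hu, norm_mul, Real.norm_eq_abs]
      gcongr
      exact (ContinuousLinearMap.le_opNorm _ _).trans
        (mul_le_mul_of_nonneg_right (hC _) (norm_nonneg _))
    · rw [Set.indicator_of_notMem hu]
      have : fderiv ℝ β (ξ + s • (u - ξ)) = 0 := by
        apply image_eq_zero_of_notMem_tsupport
        intro hm
        apply hu
        have := hR hm
        rw [Metric.mem_closedBall, dist_eq_norm] at this ⊢
        rw [add_sub_cancel_left, norm_smul, Real.norm_eq_abs, abs_of_pos (by linarith)] at this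
        nlinarith [norm_nonneg (u - ξ)]
      simp [this]
  · rw [integrable_indicator_iff Metric.isClosed_closedBall.measurableSet]
    exact (by fun_prop : Continuous fun u => |g u| * (C * ‖u - ξ‖)).continuousOn.integrableOn_compact
      (isCompact_closedBall _ _)
  · refine Eventually.of_forall fun u s _ => ?_
    have h1 : HasDerivAt (fun s : ℝ => ξ + s • (u - ξ)) (u - ξ) s := by
      simpa using ((hasDerivAt_id s).smul_const (u - ξ)).const_add ξ
    exact (((hβ.differentiable one_ne_zero _).hasFDerivAt.comp_hasDerivAt s h1)).const_mul (g u)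

/-- two-sided estimate -/
lemma dg_main {d : ℕ} {g β : EuclideanSpace ℝ (Fin d) → ℝ} (hg : Continuous g)
    (hconv : ConvexOn ℝ Set.univ g)
    (hβ : ContDiff ℝ 1 β) (hc : HasCompactSupport β) (h0 : ∀ u, 0 ≤ β u) (h1 : ∫ u, β u = 1)
    (ξ : EuclideanSpace ℝ (Fin d)) :
    (∫ u, g u * (((d : ℝ) + 1) * β u + fderiv ℝ β u (u - ξ))) ≤ g ξ ∧
    (∫ u, (2 * g u - g (ξ + (2:ℝ) • (u - ξ))) * β u) ≤
      ∫ u, g u * (((d : ℝ) + 1) * β u + fderiv ℝ β u (u - ξ)) := by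
  have hβc := hβ.continuous
  have hD := dg_deriv hg hβ hc ξ
  have hI : ∀ k : EuclideanSpace ℝ (Fin d) → ℝ, Continuous k → Integrable (fun u => k u * β u) :=
    fun k hk => (hk.mul hβc).integrable_of_hasCompactSupport hc.mul_left
  have hH : ∀ s : ℝ, 0 < s → s ^ (d + 1) * ∫ u, g u * β (ξ + s • (u - ξ)) =
      ∫ u, (s * g (ξ + s⁻¹ • (u - ξ))) * β u := by
    intro s hs
    rw [pow_succ', mul_assoc, dg_cov g β ξ hs, ← integral_const_mul]
    simp only [mul_assoc]
  have hH1 : (1:ℝ) ^ (d + 1) * ∫ u, g u * β (ξ + (1:ℝ) • (u - ξ)) = ∫ u, g u * β u := by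
    simp
  constructor
  · refine dg_slope_le hD fun s hs => ?_
    rw [hH s (by linarith), hH1, ← integral_sub (hI _ (by fun_prop)) (hI _ hg)]
    have : (s - 1) * g ξ = ∫ u, ((s - 1) * g ξ) * β u := by
      rw [integral_const_mul, h1, mul_one]
    rw [this]
    refine integral_mono ((hI _ (by fun_prop)).sub (hI _ hg)) (hI _ (by fun_prop)) fun u => ?_
    simp only
    rw [← sub_mul]
    refine mul_le_mul_of_nonneg_right ?_ (h0 u)
    have hs0 : 0 < s := by linarith
    have hinv : s⁻¹ ≤ 1 := inv_le_one_of_one_le₀ hs.le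
    have := hconv.2 (Set.mem_univ ξ) (Set.mem_univ u) 
      (show 0 ≤ 1 - s⁻¹ by linarith) (show 0 ≤ s⁻¹ by positivity) (by ring)
    have e : (1 - s⁻¹) • ξ + s⁻¹ • u = ξ + s⁻¹ • (u - ξ) := by module
    rw [e] at this
    have h2 := mul_le_mul_of_nonneg_left this hs0.le
    have h3 : s * ((1 - s⁻¹) • g ξ + s⁻¹ • g u) = (s - 1) * g ξ + g u := by
      simp only [smul_eq_mul]; field_simp
    linarith
  · refine dg_le_slope hD fun s hs hs1 => ?_
    rw [hH s (by linarith), hH1, ← integral_sub (hI _ (by fun_prop)) (hI _ hg),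
      ← integral_const_mul]
    simp only [← mul_assoc]
    refine integral_mono ((hI _ (by fun_prop)).sub (hI _ hg)) (hI _ (by fun_prop)) fun u => ?_
    simp only
    rw [← sub_mul]
    refine mul_le_mul_of_nonneg_right ?_ (h0 u)
    have hs0 : 0 < s := by linarith
    have hinv : 1 ≤ s⁻¹ := one_le_inv_iff₀.2 ⟨hs0, hs1.le⟩
    have hinv2 : s⁻¹ ≤ 2 := by
      rw [inv_le_comm₀ hs0 (by norm_num)]; linarith
    have := hconv.2 (Set.mem_univ u) (Set.mem_univ (ξ + (2:ℝ) • (u - ξ))) 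
      (show 0 ≤ 2 - s⁻¹ by linarith) (show 0 ≤ s⁻¹ - 1 by linarith) (by ring)
    have e : (2 - s⁻¹) • u + (s⁻¹ - 1) • (ξ + (2:ℝ) • (u - ξ)) = ξ + s⁻¹ • (u - ξ) := by module
    rw [e] at this
    have h2 := mul_le_mul_of_nonneg_left this hs0.le
    have h3 : s * ((2 - s⁻¹) • g u + (s⁻¹ - 1) • g (ξ + (2:ℝ) • (u - ξ))) =
        (2 * s - 1) * g u + (1 - s) * g (ξ + (2:ℝ) • (u - ξ)) := by
      simp only [smul_eq_mul]; field_simp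
    linarith

/-- De Giorgi's approximation of a nonnegative function, convex in its second
variable, from below by affine functions (Lemma 2.4, first part). -/
theorem deGiorgi_approximation_affine (d : ℕ) (hd : 1 ≤ d)
    (Ω : Set (EuclideanSpace ℝ (Fin d))) (hΩ : IsOpen Ω)
    (f : EuclideanSpace ℝ (Fin d) → EuclideanSpace ℝ (Fin d) → ℝ)
    (hf0 : ∀ x ∈ Ω, ∀ ξ, 0 ≤ f x ξ)
    (hfconv : ∀ x ∈ Ω, ConvexOn ℝ Set.univ (f x))
    (α : EuclideanSpace ℝ (Fin d) → ℝ)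
    (hα1 : ContDiff ℝ 1 α) (hα2 : HasCompactSupport α)
    (hα3 : ∀ ξ, 0 ≤ α ξ) (hα4 : (∫ ξ, α ξ) = 1)
    (αjq : ℕ → (Fin d → ℚ) → EuclideanSpace ℝ (Fin d) → ℝ)
    (hαjq : ∀ j q ξ, αjq j q ξ =
      (j : ℝ) ^ d * α ((j : ℝ) •
        ((EuclideanSpace.equiv (Fin d) ℝ).symm (fun i => (q i : ℝ)) - ξ)))
    (a0 : ℕ → (Fin d → ℚ) → EuclideanSpace ℝ (Fin d) → ℝ)
    (ha0 : ∀ j q x, a0 j q x =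
      ∫ ξ, f x ξ * (((d : ℝ) + 1) * αjq j q ξ + ⟪gradient (αjq j q) ξ, ξ⟫))
    (a : ℕ → (Fin d → ℚ) → EuclideanSpace ℝ (Fin d) → EuclideanSpace ℝ (Fin d))
    (ha : ∀ j q x, a j q x = - ∫ ξ, f x ξ • gradient (αjq j q) ξ) :
    ∀ x ∈ Ω, ∀ ξ, IsLUB
      {y : ℝ | ∃ j : ℕ, 1 ≤ j ∧ ∃ q : Fin d → ℚ,
        y = max (a0 j q x + ⟪a j q x, ξ⟫) 0} (f x ξ) := by
  intro x hx ξ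
  have hconv := hfconv x hx
  have hg : Continuous (f x) :=
    continuousOn_univ.1 (hconv.continuousOn isOpen_univ)
  obtain ⟨R, hR0, hR⟩ := hα2.isCompact.isBounded.subset_closedBall_lt 0 0
  set Q : (Fin d → ℚ) → EuclideanSpace ℝ (Fin d) :=
    fun q => (EuclideanSpace.equiv (Fin d) ℝ).symm (fun i => (q i : ℝ)) with hQ
  have hfun : ∀ j q, αjq j q = fun ξ => (j : ℝ) ^ d * α ((j : ℝ) • (Q q - ξ)) :=
    fun j q => funext fun ξ => hαjq j q ξ
  have hC1 : ∀ j q, ContDiff ℝ 1 (αjq j q) := by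
    intro j q
    rw [hfun]
    have h : ContDiff ℝ 1 (fun u : EuclideanSpace ℝ (Fin d) => (j : ℝ) • (Q q - u)) := by fun_prop
    exact contDiff_const.mul (hα1.comp h)
  have hsupp : ∀ j : ℕ, 1 ≤ j → ∀ q u, αjq j q u ≠ 0 → dist u (Q q) ≤ R / j := by
    intro j hj q u hu
    have hj0 : (0:ℝ) < j := by exact_mod_cast hj
    rw [hfun] at hu
    have h2 : (j : ℝ) • (Q q - u) ∈ tsupport α :=
      subset_tsupport _ (fun h => hu (by simp [h]))
    have h3 := hR h2
    rw [mem_closedBall_zero_iff, norm_smul, Real.norm_eq_abs, abs_of_pos hj0] at h3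
    rw [dist_comm, dist_eq_norm, le_div_iff₀ hj0]
    linarith
  have hcs : ∀ j : ℕ, 1 ≤ j → ∀ q, HasCompactSupport (αjq j q) := by
    intro j hj q
    refine HasCompactSupport.of_support_subset_isCompact (isCompact_closedBall (Q q) (R / j)) ?_
    intro u hu
    exact hsupp j hj q u hu
  have hnn : ∀ j q u, 0 ≤ αjq j q u := by
    intro j q u
    rw [hfun]
    exact mul_nonneg (by positivity) (hα3 _)
  have hone : ∀ j : ℕ, 1 ≤ j → ∀ q, ∫ u, αjq j q u = 1 := by
    intro j hj q
    have hj0 : (0:ℝ) < j := by exact_mod_cast hj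
    simp only [hfun]
    rw [integral_const_mul,
      integral_sub_left_eq_self (fun w => α ((j:ℝ) • w)) volume (Q q),
      Measure.integral_comp_smul, hα4]
    simp only [finrank_euclideanSpace, Fintype.card_fin, smul_eq_mul, mul_one]
    rw [abs_of_pos (by positivity), mul_inv_cancel₀ (by positivity)]
  have hL : ∀ j : ℕ, 1 ≤ j → ∀ q, a0 j q x + ⟪a j q x, ξ⟫ =
      ∫ u, f x u * (((d : ℝ) + 1) * αjq j q u + fderiv ℝ (αjq j q) u (u - ξ)) := by
    intro j hj q
    have hin : ∀ u v, ⟪gradient (αjq j q) u, v⟫ = fderiv ℝ (αjq j q) u v := by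
      intro u v
      simp [gradient]
    have hfc : Continuous (fderiv ℝ (αjq j q)) := (hC1 j q).continuous_fderiv one_ne_zero
    have hfs : HasCompactSupport (fderiv ℝ (αjq j q)) := (hcs j hj q).fderiv ℝ
    have hgc : Continuous (gradient (αjq j q)) :=
      (InnerProductSpace.toDual ℝ (EuclideanSpace ℝ (Fin d))).symm.continuous.comp hfc
    have hi1 : Integrable (fun u => f x u • gradient (αjq j q) u) := by
      refine (hg.smul hgc).integrable_of_hasCompactSupport (hfs.mono ?_)
      intro u hu hu0
      simp [gradient, hu0] at hu
    have hαc := (hC1 j q).continuous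
    have hi2 : Integrable (fun u => f x u *
        (((d : ℝ) + 1) * αjq j q u + fderiv ℝ (αjq j q) u u)) := by
      have e1 : Integrable (fun u => f x u * (((d : ℝ) + 1) * αjq j q u)) :=
        (by fun_prop : Continuous _).integrable_of_hasCompactSupport
          ((hcs j hj q).mul_left.mul_left)
      have e2 : Integrable (fun u => f x u * fderiv ℝ (αjq j q) u u) := by
        refine Continuous.integrable_of_hasCompactSupport (by fun_prop) (hfs.mono ?_)
        intro u hu hu0
        simp [hu0] at hu
      simp only [mul_add]
      exact e1.add e2
    have e3 : ⟪a j q x, ξ⟫ = - ∫ u, f x u * fderiv ℝ (αjq j q) u ξ := by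
      rw [ha, inner_neg_left, real_inner_comm, ← integral_inner hi1]
      congr 2
      ext u
      rw [real_inner_smul_right, real_inner_comm, hin]
    have hi3 : Integrable (fun u => f x u * fderiv ℝ (αjq j q) u ξ) := by
      refine Continuous.integrable_of_hasCompactSupport (by fun_prop) (hfs.mono ?_)
      intro u hu hu0
      simp [hu0] at hu
    rw [e3, ha0]
    simp only [hin]
    rw [← sub_eq_add_neg, ← integral_sub hi2 hi3]
    congr 1
    ext u
    rw [map_sub]
    ring
  constructor
  · rintro y ⟨j, hj, q, rfl⟩
    refine max_le ?_ (hf0 x hx ξ)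
    rw [hL j hj q]
    exact (dg_main hg hconv (hC1 j q) (hcs j hj q) (hnn j q) (hone j hj q) ξ).1
  · intro b hb
    refine le_of_forall_pos_sub_le fun ε hε => ?_
    have hk : Continuous (fun u => 2 * f x u - f x (ξ + (2:ℝ) • (u - ξ))) := by fun_prop
    obtain ⟨δ, hδ, hδ'⟩ := Metric.continuous_iff.1 hk ξ ε hε
    obtain ⟨j, hj⟩ := exists_nat_gt (max 1 (R / (δ / 2)))
    have hj1 : 1 ≤ j := by
      have : (1:ℝ) < j := lt_of_le_of_lt (le_max_left _ _) hj
      exact_mod_cast this.le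
    have hj0 : (0:ℝ) < j := by exact_mod_cast hj1
    have hjR : R / j < δ / 2 := by
      have := lt_of_le_of_lt (le_max_right _ _) hj
      rw [div_lt_iff₀ (by positivity)] at this ⊢
      linarith
    have hdense : DenseRange Q := by
      have h1 : DenseRange (fun (q : Fin d → ℚ) (i : Fin d) => (q i : ℝ)) :=
        DenseRange.piMap (fun _ => Rat.denseRange_cast)
      exact (EuclideanSpace.equiv (Fin d) ℝ).symm.surjective.denseRange.comp h1
        (EuclideanSpace.equiv (Fin d) ℝ).symm.continuous
    obtain ⟨q, hq⟩ := hdense.exists_dist_lt ξ (half_pos hδ)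
    have hmain := (dg_main hg hconv (hC1 j q) (hcs j hj1 q) (hnn j q) (hone j hj1 q) ξ).2
    have hle : f x ξ - ε ≤ ∫ u, (2 * f x u - f x (ξ + (2:ℝ) • (u - ξ))) * αjq j q u := by
      have : f x ξ - ε = ∫ u, (f x ξ - ε) * αjq j q u := by
        rw [integral_const_mul, hone j hj1 q, mul_one]
      rw [this]
      have hαc := (hC1 j q).continuous
      refine integral_mono
        ((by fun_prop : Continuous _).integrable_of_hasCompactSupport (hcs j hj1 q).mul_left)
        ((hk.mul hαc).integrable_of_hasCompactSupport (hcs j hj1 q).mul_left) fun u => ?_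
      by_cases hu : αjq j q u = 0
      · simp [hu]
      · have h1 := hsupp j hj1 q u hu
        have h2 : dist u ξ < δ := by
          have := dist_triangle u (Q q) ξ
          rw [dist_comm (Q q) ξ] at this
          linarith
        have h3 := hδ' u h2
        rw [Real.dist_eq, abs_lt] at h3
        refine mul_le_mul_of_nonneg_right ?_ (hnn j q u)
        have h4 : ξ + (2:ℝ) • (ξ - ξ) = ξ := by simp
        rw [h4] at h3
        linarith [h3.1]
    have hb' := hb ⟨j, hj1, q, rfl⟩
    rw [hL j hj1 q] at hb'
    linarith [le_max_left (∫ u, f x u * (((d : ℝ) + 1) * αjq j q u +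
      fderiv ℝ (αjq j q) u (u - ξ))) 0]
end

section
/- Let Ω ⊆ ℝ^d be open and let f : Ω × ℝ^d → [0,∞) be convex and positively 1-homogeneous in its second variable (f(x, sξ) = s f(x,ξ) for all s > 0). Fix a nonnegative function α ∈ C_c^1(ℝ^d) with ∫_{ℝ^d} α(ξ) dξ = 1, set α_{j,q}(ξ) := j^d α(j(q − ξ)) for j ∈ ℕ, j ≥ 1, q ∈ ℚ^d, and define a_{j,q}(x) := −∫_{ℝ^d} f(x,ξ) ∇α_{j,q}(ξ) dξ. Then for every (x,ξ) ∈ Ω × ℝ^d one has f(x,ξ) = sup_{j ∈ ℕ, q ∈ ℚ^d} max(⟨a_{j,q}(x), ξ⟩, 0). -/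
open MeasureTheory
open scoped RealInnerProductSpace

lemma dg_sub {E : Type*} [NormedAddCommGroup E] [InnerProductSpace ℝ E] (g : E → ℝ)
    (hc : ConvexOn ℝ Set.univ g) (hh : ∀ s : ℝ, 0 < s → ∀ ξ, g (s • ξ) = s * g ξ) (u v : E) :
    g (u + v) ≤ g u + g v := by
  have h := hc.2 (Set.mem_univ ((2:ℝ) • u)) (Set.mem_univ ((2:ℝ) • v))
    (by norm_num : (0:ℝ) ≤ 1/2) (by norm_num : (0:ℝ) ≤ 1/2) (by norm_num)
  rw [smul_smul, smul_smul, hh 2 two_pos, hh 2 two_pos] at h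
  norm_num at h
  linarith

lemma dg_bound {E : Type*} [NormedAddCommGroup E] [InnerProductSpace ℝ E]
    [FiniteDimensional ℝ E] (g : E → ℝ)
    (hc : ConvexOn ℝ Set.univ g) (hh : ∀ s : ℝ, 0 < s → ∀ ξ, g (s • ξ) = s * g ξ) :
    ∃ C : NNReal, ∀ u, g u ≤ C * ‖u‖ := by
  have hcont : Continuous g := hc.locallyLipschitz.continuous
  obtain ⟨C, hC⟩ := (isCompact_sphere (0:E) 1).exists_bound_of_continuousOn hcont.continuousOn
  have h0 : g 0 = 0 := by
    have := hh 2 two_pos 0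
    rw [smul_zero] at this
    linarith
  refine ⟨C.toNNReal, fun u => ?_⟩
  by_cases hu : u = 0
  · simp [hu, h0]
  have hn : 0 < ‖u‖ := norm_pos_iff.2 hu
  have h1 := hC (‖u‖⁻¹ • u) (by simp [norm_smul, hn.ne'])
  have h2 := hh ‖u‖ hn (‖u‖⁻¹ • u)
  rw [smul_smul, mul_inv_cancel₀ hn.ne', one_smul] at h2
  rw [h2, mul_comm]
  gcongr
  exact (le_abs_self _).trans (h1.trans (Real.le_coe_toNNReal C))

lemma dg_lip {E : Type*} [NormedAddCommGroup E] [InnerProductSpace ℝ E] (g : E → ℝ)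
    (hc : ConvexOn ℝ Set.univ g) (hh : ∀ s : ℝ, 0 < s → ∀ ξ, g (s • ξ) = s * g ξ)
    (C : NNReal) (hC : ∀ u, g u ≤ C * ‖u‖) : LipschitzWith C g := by
  refine LipschitzWith.of_le_add_mul C fun x y => ?_
  have := dg_sub g hc hh y (x - y)
  rw [add_sub_cancel] at this
  rw [dist_eq_norm]
  linarith [hC (x - y)]

lemma dg_upper {E : Type*} [NormedAddCommGroup E] [InnerProductSpace ℝ E] (g : E → ℝ)
    (hc : ConvexOn ℝ Set.univ g) (hh : ∀ s : ℝ, 0 < s → ∀ ξ, g (s • ξ) = s * g ξ)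
    (η ξ : E) (hd : LineDifferentiableAt ℝ g η ξ) : lineDeriv ℝ g η ξ ≤ g ξ := by
  refine le_of_tendsto hd.hasLineDerivAt.tendsto_slope_zero_right ?_
  filter_upwards [self_mem_nhdsWithin] with t ht
  have ht : 0 < t := ht
  have := dg_sub g hc hh η (t • ξ)
  rw [hh t ht] at this
  rw [smul_eq_mul, inv_mul_le_iff₀ ht]
  linarith

lemma dg_lower {E : Type*} [NormedAddCommGroup E] [InnerProductSpace ℝ E] (g : E → ℝ)
    (hc : ConvexOn ℝ Set.univ g) (hh : ∀ s : ℝ, 0 < s → ∀ ξ, g (s • ξ) = s * g ξ)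
    (C : NNReal) (hC : ∀ u, g u ≤ C * ‖u‖)
    (η ξ : E) (hd : LineDifferentiableAt ℝ g η ξ) :
    g ξ - 2 * C * ‖ξ - η‖ ≤ lineDeriv ℝ g η ξ := by
  refine ge_of_tendsto hd.hasLineDerivAt.tendsto_slope_zero_left ?_
  filter_upwards [Ioo_mem_nhdsLT (show (-1:ℝ) < 0 by norm_num)] with t ht
  obtain ⟨h1, h2⟩ := ht
  have e : η + t • ξ = (1 + t) • η + (-t) • (η - ξ) := by module
  have := dg_sub g hc hh ((1 + t) • η) ((-t) • (η - ξ))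
  rw [← e, hh _ (by linarith), hh _ (by linarith)] at this
  have h3 := dg_sub g hc hh η (ξ - η)
  rw [add_sub_cancel] at h3
  have h4 := hC (ξ - η)
  have h5 := hC (η - ξ)
  rw [norm_sub_rev] at h5
  have h6 : t⁻¹ * (g (η + t • ξ) - g η) = (-t)⁻¹ * (g η - g (η + t • ξ)) := by
    rw [inv_neg]; ring
  rw [smul_eq_mul, h6, le_inv_mul_iff₀ (by linarith)]
  nlinarith

lemma dg_ibp {d : ℕ} (g β : EuclideanSpace ℝ (Fin d) → ℝ) (C : NNReal)
    (hg : LipschitzWith C g) (hβ : ContDiff ℝ 1 β) (hs : HasCompactSupport β)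
    (ξ : EuclideanSpace ℝ (Fin d)) :
    ⟪-∫ η, g η • gradient β η, ξ⟫ = ∫ η, lineDeriv ℝ g η ξ * β η := by
  obtain ⟨D, hD⟩ := hβ.lipschitzWith_of_hasCompactSupport hs one_ne_zero
  have hgc : Continuous (gradient β) :=
    (InnerProductSpace.toDual ℝ (EuclideanSpace ℝ (Fin d))).symm.continuous.comp
      (hβ.continuous_fderiv one_ne_zero)
  have hgs : HasCompactSupport (gradient β) :=
    (hs.fderiv ℝ).comp_left
      (g := (InnerProductSpace.toDual ℝ (EuclideanSpace ℝ (Fin d))).symm) (map_zero _)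
  have hint : Integrable (fun η => g η • gradient β η) :=
    (hg.continuous.smul hgc).integrable_of_hasCompactSupport hgs.smul_left
  rw [hg.integral_lineDeriv_mul_eq hD hs ξ, inner_neg_left, real_inner_comm,
    ← integral_inner hint, ← integral_neg]
  congr 1
  ext η
  rw [lineDeriv_neg, (hβ.differentiable one_ne_zero η).lineDeriv_eq_fderiv, inner_smul_right,
    real_inner_comm, inner_gradient_left]
  ring

lemma dg_int {d : ℕ} (g β : EuclideanSpace ℝ (Fin d) → ℝ)
    (hc : ConvexOn ℝ Set.univ g) (hh : ∀ s : ℝ, 0 < s → ∀ ξ, g (s • ξ) = s * g ξ)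
    (C : NNReal) (hC : ∀ u, g u ≤ C * ‖u‖) (hβ : ContDiff ℝ 1 β) (hs : HasCompactSupport β)
    (hp : ∀ η, 0 ≤ β η) (h1 : ∫ η, β η = 1)
    (ξ : EuclideanSpace ℝ (Fin d)) :
    ⟪-∫ η, g η • gradient β η, ξ⟫ ≤ g ξ ∧
    ∀ r : ℝ, (∀ η, β η ≠ 0 → ‖ξ - η‖ ≤ r) →
      g ξ - 2 * C * r ≤ ⟪-∫ η, g η • gradient β η, ξ⟫ := by
  have hg := dg_lip g hc hh C hC
  rw [dg_ibp g β C hg hβ hs ξ]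
  have hβi : Integrable β := hβ.continuous.integrable_of_hasCompactSupport hs
  have hi : Integrable (fun η => lineDeriv ℝ g η ξ * β η) :=
    (hg.locallyIntegrable_lineDeriv ξ).integrable_smul_right_of_hasCompactSupport hβ.continuous hs
  have hk : ∀ c : ℝ, ∫ η, c * β η = c := fun c => by rw [integral_const_mul, h1, mul_one]
  constructor
  · rw [← hk (g ξ)]
    refine integral_mono_ae hi (hβi.const_mul _) ?_
    filter_upwards [hg.ae_lineDifferentiableAt ξ] with η hη
    exact mul_le_mul_of_nonneg_right (dg_upper g hc hh η ξ hη) (hp η)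
  · intro r hr
    rw [← hk (g ξ - 2 * C * r)]
    refine integral_mono_ae (hβi.const_mul _) hi ?_
    filter_upwards [hg.ae_lineDifferentiableAt ξ] with η hη
    by_cases h : β η = 0
    · simp [h]
    refine mul_le_mul_of_nonneg_right ?_ (hp η)
    refine le_trans ?_ (dg_lower g hc hh C hC η ξ hη)
    have := hr η h
    gcongr

/-- De Giorgi's approximation formula (2.4) for nonnegative functions, convex and
positively 1-homogeneous in the second variable (Lemma 2.4, second part). -/
theorem deGiorgi_approximation_homogeneous (d : ℕ) (hd : 1 ≤ d)
    (Ω : Set (EuclideanSpace ℝ (Fin d))) (hΩ : IsOpen Ω)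
    (f : EuclideanSpace ℝ (Fin d) → EuclideanSpace ℝ (Fin d) → ℝ)
    (hf0 : ∀ x ∈ Ω, ∀ ξ, 0 ≤ f x ξ)
    (hfconv : ∀ x ∈ Ω, ConvexOn ℝ Set.univ (f x))
    (hfhom : ∀ x ∈ Ω, ∀ (s : ℝ), 0 < s → ∀ ξ, f x (s • ξ) = s * f x ξ)
    (α : EuclideanSpace ℝ (Fin d) → ℝ)
    (hα1 : ContDiff ℝ 1 α) (hα2 : HasCompactSupport α)
    (hα3 : ∀ ξ, 0 ≤ α ξ) (hα4 : (∫ ξ, α ξ) = 1)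
    (αjq : ℕ → (Fin d → ℚ) → EuclideanSpace ℝ (Fin d) → ℝ)
    (hαjq : ∀ j q ξ, αjq j q ξ =
      (j : ℝ) ^ d * α ((j : ℝ) •
        ((EuclideanSpace.equiv (Fin d) ℝ).symm (fun i => (q i : ℝ)) - ξ)))
    (a : ℕ → (Fin d → ℚ) → EuclideanSpace ℝ (Fin d) → EuclideanSpace ℝ (Fin d))
    (ha : ∀ j q x, a j q x = - ∫ ξ, f x ξ • gradient (αjq j q) ξ) :
    ∀ x ∈ Ω, ∀ ξ, IsLUB
      {y : ℝ | ∃ j : ℕ, 1 ≤ j ∧ ∃ q : Fin d → ℚ,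
        y = max ⟪a j q x, ξ⟫ 0} (f x ξ) := by
  intro x hx ξ
  obtain ⟨C, hC⟩ := dg_bound (f x) (hfconv x hx) (hfhom x hx)
  have key : ∀ j : ℕ, 1 ≤ j → ∀ q : Fin d → ℚ, ContDiff ℝ 1 (αjq j q) ∧
      HasCompactSupport (αjq j q) ∧ (∀ η, 0 ≤ αjq j q η) ∧ ∫ η, αjq j q η = 1 := by
    intro j hj q
    have hj0 : (0:ℝ) < j := by exact_mod_cast hj
    have e : αjq j q = fun ξ => (j : ℝ) ^ d * α ((j : ℝ) •
        ((EuclideanSpace.equiv (Fin d) ℝ).symm (fun i => (q i : ℝ)) - ξ)) := funext (hαjq j q)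
    rw [e]
    refine ⟨?_, ?_, ?_, ?_⟩
    · exact contDiff_const.mul (hα1.comp (by fun_prop))
    · refine HasCompactSupport.mul_left ?_
      exact hα2.comp_homeomorph ((Homeomorph.subLeft
        ((EuclideanSpace.equiv (Fin d) ℝ).symm (fun i => (q i : ℝ)))).trans
        (Homeomorph.smulOfNeZero (j:ℝ) hj0.ne'))
    · intro η
      exact mul_nonneg (by positivity) (hα3 _)
    · rw [integral_const_mul, integral_sub_left_eq_self (fun η => α ((j:ℝ) • η)),
        Measure.integral_comp_smul, hα4, finrank_euclideanSpace_fin, abs_of_pos (by positivity)]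
      simp [hj0.ne']
  have main := fun j hj q => dg_int (f x) (αjq j q) (hfconv x hx) (hfhom x hx) C hC
    (key j hj q).1 (key j hj q).2.1 (key j hj q).2.2.1 (key j hj q).2.2.2 ξ
  constructor
  · rintro y ⟨j, hj, q, rfl⟩
    rw [ha]
    exact max_le (main j hj q).1 (hf0 x hx ξ)
  · intro b hb
    obtain ⟨R, hR⟩ := hα2.isBounded.exists_norm_le
    have hR : ∀ z, α z ≠ 0 → ‖z‖ ≤ R := fun z hz => hR z (subset_tsupport _ hz)
    refine le_of_forall_pos_le_add fun ε hε => ?_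
    obtain ⟨δ, hδ, hδε⟩ : ∃ δ > 0, 2 * C * (2 * δ) ≤ ε := by
      refine ⟨ε / (4 * C + 1), by positivity, ?_⟩
      have : (0:ℝ) < 4 * C + 1 := by positivity
      rw [← mul_div_assoc, ← mul_div_assoc, div_le_iff₀ this]
      nlinarith
    obtain ⟨j, hj⟩ := exists_nat_gt (max 1 (R / δ))
    have hj1 : (1:ℝ) < j := (le_max_left _ _).trans_lt hj
    have hj2 : R < j * δ := (div_lt_iff₀ hδ).1 ((le_max_right _ _).trans_lt hj)
    have hdense : DenseRange (fun q : Fin d → ℚ =>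
        (EuclideanSpace.equiv (Fin d) ℝ).symm (fun i => (q i : ℝ))) :=
      (EuclideanSpace.equiv (Fin d) ℝ).symm.surjective.denseRange.comp
        (DenseRange.piMap fun _ => Rat.denseRange_cast)
        (EuclideanSpace.equiv (Fin d) ℝ).symm.continuous
    obtain ⟨q, hq⟩ := hdense.exists_dist_lt ξ hδ
    have hj1' : 1 ≤ j := by exact_mod_cast hj1.le
    have h1 := (main j hj1' q).2 (2 * δ) (by
      intro η hη
      rw [hαjq] at hη
      have h2 := hR _ (right_ne_zero_of_mul hη)
      rw [norm_smul, Real.norm_of_nonneg (by positivity)] at h2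
      have h3 : ‖(EuclideanSpace.equiv (Fin d) ℝ).symm (fun i => (q i : ℝ)) - η‖ ≤ δ := by
        by_contra! h
        nlinarith
      rw [dist_eq_norm] at hq
      have := norm_sub_le_norm_sub_add_norm_sub ξ
        ((EuclideanSpace.equiv (Fin d) ℝ).symm (fun i => (q i : ℝ))) η
      linarith)
    rw [← ha] at h1
    have h4 := hb ⟨j, hj1', q, rfl⟩
    linarith [le_max_left ⟪a j q x, ξ⟫ 0]
end

section
/- Let d ≥ 1 and let f : ℝ^d → [0,∞) be even, convex, positively 1-homogeneous (f(sξ) = s f(ξ) for all s > 0 and all ξ), and suppose there is c > 0 with f(ξ) ≥ c‖ξ‖ for all ξ ∈ ℝ^d. Define K := {z ∈ ℝ^d : ⟨z,ξ⟩ ≤ f(ξ) for every ξ ∈ ℝ^d}, and for h ∈ ℕ, h ≥ 1, define ϑ_h : ℝ → ℝ by ϑ_h(y) := (2/π) arctan(h|y|). Then for every r, t ∈ ℝ^d with r ≠ t and every ξ ∈ ℝ^d one has f(ξ) = sup { (ϑ_h(⟨r − p, b⟩) − ϑ_h(⟨t − p, b⟩)) · ⟨b, ξ⟩ : h ∈ ℕ,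 h ≥ 1, b ∈ K, p ∈ ℝ^d }. -/
open scoped RealInnerProductSpace

theorem aux_support (d : ℕ) (f : EuclideanSpace ℝ (Fin d) → ℝ)
    (hf0 : ∀ ξ, 0 ≤ f ξ)
    (hconv : ConvexOn ℝ Set.univ f)
    (hhom : ∀ (s : ℝ), 0 < s → ∀ ξ, f (s • ξ) = s * f ξ)
    (ξ : EuclideanSpace ℝ (Fin d)) :
    ∃ b : EuclideanSpace ℝ (Fin d), (∀ x, ⟪b, x⟫ ≤ f x) ∧ ⟪b, ξ⟫ = f ξ := by
  have hz : f 0 = 0 := by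
    have := hhom 2 (by norm_num) 0
    rw [smul_zero] at this
    linarith
  by_cases h0 : ξ = 0
  · subst h0
    exact ⟨0, fun x => by simpa using hf0 x, by simp [hz]⟩
  have hadd : ∀ x y, f (x + y) ≤ f x + f y := by
    intro x y
    have h := hconv.2 (Set.mem_univ x) (Set.mem_univ y)
      (show (0 : ℝ) ≤ 1/2 by norm_num) (show (0 : ℝ) ≤ 1/2 by norm_num) (by norm_num)
    rw [← smul_add, hhom (1/2) (by norm_num)] at h
    simp only [smul_eq_mul] at h
    linarith
  obtain ⟨g, hg1, hg2⟩ := exists_extension_of_le_sublinear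
    (LinearPMap.mkSpanSingleton (K := ℝ) ξ (f ξ) h0) f hhom hadd (by
      rintro ⟨x, hx⟩
      obtain ⟨a, rfl⟩ := Submodule.mem_span_singleton.1 hx
      refine (LinearPMap.mkSpanSingleton'_apply ξ (f ξ) _ a hx).le.trans ?_
      simp only [smul_eq_mul, RingHom.id_apply]
      rcases lt_trichotomy a 0 with ha | ha | ha
      · exact (mul_nonpos_of_nonpos_of_nonneg ha.le (hf0 ξ)).trans (hf0 _)
      · subst ha; simp [hz]
      · rw [hhom a ha])
  refine ⟨(InnerProductSpace.toDual ℝ _).symm (LinearMap.toContinuousLinearMap g), ?_, ?_⟩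
  · intro x
    rw [InnerProductSpace.toDual_symm_apply]
    exact hg2 x
  · rw [InnerProductSpace.toDual_symm_apply]
    have := hg1 ⟨ξ, Submodule.mem_span_singleton_self ξ⟩
    rw [LinearPMap.mkSpanSingleton_apply] at this
    exact this

/-- The pointwise representation formula (4.8) underlying Proposition 4.4: the
supremum over the truncated fields `w ↦ ϑ_h(⟪w - p, b⟫) b`, `h ≥ 1`, `b ∈ K`,
`p ∈ ℝ^d`, recovers `f ξ` as soon as `r ≠ t`. -/
theorem representation_formula_truncated_fields (d : ℕ) (hd : 1 ≤ d)
    (f : EuclideanSpace ℝ (Fin d) → ℝ)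
    (hf0 : ∀ ξ, 0 ≤ f ξ)
    (heven : ∀ ξ, f (-ξ) = f ξ)
    (hconv : ConvexOn ℝ Set.univ f)
    (hhom : ∀ (s : ℝ), 0 < s → ∀ ξ, f (s • ξ) = s * f ξ)
    (c : ℝ) (hc : 0 < c) (hcoer : ∀ ξ, c * ‖ξ‖ ≤ f ξ)
    (K : Set (EuclideanSpace ℝ (Fin d)))
    (hK : K = {z | ∀ ξ, ⟪z, ξ⟫ ≤ f ξ})
    (ϑ : ℕ → ℝ → ℝ)
    (hϑ : ∀ h y, ϑ h y = 2 / Real.pi * Real.arctan ((h : ℝ) * |y|)) :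
    ∀ r t : EuclideanSpace ℝ (Fin d), r ≠ t → ∀ ξ : EuclideanSpace ℝ (Fin d),
      IsLUB {y : ℝ | ∃ h : ℕ, 1 ≤ h ∧ ∃ b ∈ K, ∃ p : EuclideanSpace ℝ (Fin d),
        y = (ϑ h ⟪r - p, b⟫ - ϑ h ⟪t - p, b⟫) * ⟪b, ξ⟫} (f ξ) := by
  intro r t hrt ξ
  subst hK
  have hpi := Real.pi_pos
  have hb0 : ∀ h y, 0 ≤ ϑ h y := by
    intro h y
    rw [hϑ]
    have : 0 ≤ Real.arctan ((h : ℝ) * |y|) := Real.arctan_nonneg.2 (by positivity)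
    positivity
  have hb1 : ∀ h y, ϑ h y ≤ 1 := by
    intro h y
    rw [hϑ]
    have h1 := (Real.arctan_lt_pi_div_two ((h : ℝ) * |y|)).le
    calc 2 / Real.pi * Real.arctan ((h : ℝ) * |y|) ≤ 2 / Real.pi * (Real.pi / 2) := by gcongr
      _ = 1 := by field_simp
  constructor
  · rintro y ⟨h, -, b, hb, p, rfl⟩
    have h1 := hb ξ
    have h2 := hb (-ξ)
    rw [heven, inner_neg_right] at h2
    have h3 : |⟪b, ξ⟫| ≤ f ξ := abs_le.2 ⟨by linarith, h1⟩
    have h4 : |ϑ h ⟪r - p, b⟫ - ϑ h ⟪t - p, b⟫| ≤ 1 :=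
      abs_le.2 ⟨by linarith [hb0 h ⟪r - p, b⟫, hb1 h ⟪t - p, b⟫],
        by linarith [hb1 h ⟪r - p, b⟫, hb0 h ⟪t - p, b⟫]⟩
    refine (le_abs_self _).trans ?_
    rw [abs_mul]
    nlinarith [abs_nonneg ⟪b, ξ⟫]
  · intro M hM
    have key : ∀ b : EuclideanSpace ℝ (Fin d), (∀ x, ⟪b, x⟫ ≤ f x) → ⟪b, r - t⟫ ≠ 0 →
        ⟪b, ξ⟫ ≤ M := by
      intro b hb hne
      have hpos : 0 < |⟪r - t, b⟫| := abs_pos.2 (by rwa [real_inner_comm])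
      have hlim : Filter.Tendsto (fun h : ℕ => 2 / Real.pi *
          Real.arctan ((h : ℝ) * |⟪r - t, b⟫|) * ⟪b, ξ⟫) Filter.atTop
          (nhds (2 / Real.pi * (Real.pi / 2) * ⟪b, ξ⟫)) := by
        refine Filter.Tendsto.mul_const _ (Filter.Tendsto.const_mul _ ?_)
        exact (Real.tendsto_arctan_atTop.mono_right nhdsWithin_le_nhds).comp
          (tendsto_natCast_atTop_atTop.atTop_mul_const hpos)
      have h1 : 2 / Real.pi * (Real.pi / 2) = 1 := by field_simp
      rw [h1, one_mul] at hlim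
      refine le_of_tendsto hlim ?_
      filter_upwards [Filter.eventually_ge_atTop 1] with h hh
      refine hM ⟨h, hh, b, hb, t, ?_⟩
      rw [hϑ, hϑ]
      simp
    obtain ⟨b, hb, hbξ⟩ := aux_support d f hf0 hconv hhom ξ
    obtain ⟨b', hb', hbv⟩ := aux_support d f hf0 hconv hhom (r - t)
    have hv : 0 < f (r - t) :=
      lt_of_lt_of_le (mul_pos hc (norm_pos_iff.2 (sub_ne_zero.2 hrt))) (hcoer _)
    by_cases hz : ⟪b, r - t⟫ = 0
    · have hlim : Filter.Tendsto (fun s : ℝ => (1 - s) * f ξ + s * ⟪b', ξ⟫)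
          (nhdsWithin 0 (Set.Ioi 0)) (nhds ((1 - 0) * f ξ + 0 * ⟪b', ξ⟫)) := by
        refine Filter.Tendsto.mono_left (Continuous.tendsto ?_ 0) nhdsWithin_le_nhds
        fun_prop
      simp only [sub_zero, one_mul, zero_mul, add_zero] at hlim
      refine le_of_tendsto hlim ?_
      filter_upwards [Ioo_mem_nhdsGT (zero_lt_one' ℝ)] with s hs
      have := key ((1 - s) • b + s • b') (by
        intro x
        rw [inner_add_left, real_inner_smul_left, real_inner_smul_left]
        nlinarith [hb x, hb' x, hs.1, hs.2]) (by
        rw [inner_add_left, real_inner_smul_left, real_inner_smul_left, hz, hbv, mul_zero, zero_add]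
        exact (mul_pos hs.1 hv).ne')
      rwa [inner_add_left, real_inner_smul_left, real_inner_smul_left, hbξ] at this
    · rw [← hbξ]
      exact key b hb hz
end
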